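/- (Window form of regularity.) For all positive integers r and d there exists a natural number N such that the following holds. Let F be a field with |F| ≥ N and let B ≤ M(n,F) be a matrix space. If the (d,d)-blow-up B^{(d,d)} contains a matrix of rank greater than (r − 1)d, then there exist a matrix Ã ∈ B^{(d,d)} and index sequences 1 ≤ i_1 < … < i_r ≤ n and 1 ≤ j_1 < … < j_r ≤ n such that the r×r window of Ã indexed by these sequences (an rd×rd matrix) is nonsingular. -/

import Mathlib

open Matrix Kronecker

/-- The (k,ℓ)-blow-up of a matrix space `B ≤ M(n,F)`. -/
def blowUp {F : Type} [Field F] {n : ℕ} (B : Submodule F (Matrix (Fin n) (Fin n) F))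
    (k ℓ : ℕ) : Submodule F (Matrix (Fin n × Fin k) (Fin n × Fin ℓ) F) :=
  Submodule.span F {M | ∃ A ∈ B, ∃ T : Matrix (Fin k) (Fin ℓ) F, M = A ⊗ₖ T}

/-- The `r×r` window of `A ∈ M(n,F) ⊗ M(d,F)` indexed by sequences
`i, j : Fin r → Fin n`: the `rd×rd` submatrix of blocks `(i k, j ℓ)`. -/
def window {F : Type} [Field F] {n d : ℕ} (A : Matrix (Fin n × Fin d) (Fin n × Fin d) F)
    (r : ℕ) (i j : Fin r → Fin n) : Matrix (Fin r × Fin d) (Fin r × Fin d) F :=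
  fun p q => A (i p.1, p.2) (j q.1, q.2)

open WithZero in
/-- A nonzero `d × d` matrix over a valued field that is fixed by the semilinear automorphism
`X ↦ P σ(X) P⁻¹`, where `P` is a cyclic shift with a single entry of valuation `exp 1` and all
other entries of valuation one, is nonsingular. -/
theorem det_ne_zero_of_cyclic_twist {E : Type*} [Field E] {d : ℕ} [NeZero d]
    (v : Valuation E ℤᵐ⁰) (σ : E →+* E) (hσ : ∀ x, v (σ x) = v x) (q : Fin d → E)
    (hq : ∀ i : Fin d, v (q i) ^ d * exp (((i + 1 : Fin d) : ℕ) : ℤ) = exp ((i : ℕ) + 1 : ℤ))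
    (X : Matrix (Fin d) (Fin d) E)
    (hX : ∀ i j, X (i + 1) (j + 1) * q j = q i * σ (X i j)) (hX0 : X ≠ 0) : X.det ≠ 0 := by
  have hd : d ≠ 0 := NeZero.ne d
  have hexp : ∀ n : ℤ, (exp n : ℤᵐ⁰) ≠ 0 := fun n => exp_ne_zero
  set w : Fin d → Fin d → ℤᵐ⁰ := fun i j => v (X i j) ^ d * exp ((i : ℕ) - (j : ℕ) : ℤ) with hw
  have hshift : ∀ i j, w (i + 1) (j + 1) = w i j := by
    intro i j
    have h1 : v (X (i + 1) (j + 1)) * v (q j) = v (q i) * v (X i j) := by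
      rw [← map_mul, hX, map_mul, hσ]
    have h2 := congrArg (· ^ d) h1
    simp only [mul_pow] at h2
    have hqj := hq j
    have hqi := hq i
    have hqj0 : v (q j) ^ d ≠ 0 := by
      intro h
      rw [h, zero_mul] at hqj
      exact hexp _ hqj.symm
    have e1 : ∀ a b : ℤ, (exp (a - b) : ℤᵐ⁰) = exp a / exp b := fun a b => exp_sub a b
    simp only [hw, e1]
    rw [exp_add] at hqj hqi
    rw [← mul_div_assoc, ← mul_div_assoc, div_eq_div_iff (hexp _) (hexp _)]
    have h3 : v (q j) ^ d * exp (1 : ℤ) ≠ 0 := mul_ne_zero hqj0 (hexp _)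
    apply mul_right_cancel₀ h3
    calc _ = (v (X (i + 1) (j + 1)) ^ d * v (q j) ^ d) * exp (((i + 1 : Fin d) : ℕ) : ℤ)
              * (exp ((j : ℕ) : ℤ) * exp 1) := by ac_rfl
      _ = (v (q i) ^ d * exp (((i + 1 : Fin d) : ℕ) : ℤ)) * v (X i j) ^ d
            * (v (q j) ^ d * exp (((j + 1 : Fin d) : ℕ) : ℤ)) := by rw [h2, hqj]; ac_rfl
      _ = _ := by rw [hqi]; ac_rfl
  have hshift' : ∀ (k i j : Fin d), w (i + k) (j + k) = w i j := by
    intro k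
    obtain ⟨m, hm⟩ := k
    induction m with
    | zero => exact fun i j => by simp
    | succ m ih =>
      intro i j
      have h1 : (⟨m + 1, hm⟩ : Fin d) = ⟨m, m.lt_succ_self.trans hm⟩ + 1 := by
        apply Fin.ext
        rw [Fin.val_add, Fin.val_one', Nat.add_mod_mod, Nat.mod_eq_of_lt hm]
      rw [h1, ← add_assoc, ← add_assoc, hshift, ih]
  have hres : ∀ i j i' j', w i j ≠ 0 → w i j = w i' j' → i - j = i' - j' := by
    intro i j i' j' h0 h
    have h0' := h ▸ h0
    have hv : v (X i j) ≠ 0 := fun h => h0 (by simp [hw, h, hd])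
    have hv' : v (X i' j') ≠ 0 := fun h => h0' (by simp [hw, h, hd])
    obtain ⟨a, ha⟩ : ∃ a, v (X i j) = exp a := ⟨_, (exp_log hv).symm⟩
    obtain ⟨b, hb⟩ : ∃ b, v (X i' j') = exp b := ⟨_, (exp_log hv').symm⟩
    simp only [hw, ha, hb, ← WithZero.exp_nsmul, ← exp_add, exp_inj, nsmul_eq_mul] at h
    have key : ((i : ℕ) : ℤ) - (j : ℕ) ≡ (i' : ℕ) - (j' : ℕ) [ZMOD d] :=
      Int.modEq_iff_dvd.2 ⟨a - b, by linear_combination -h⟩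
    have h5 : ((i : ℕ) : ℤ) + (j' : ℕ) ≡ (i' : ℕ) + (j : ℕ) [ZMOD d] := by
      have := key.add_right ((j : ℕ) + (j' : ℕ) : ℤ)
      convert this using 1 <;> ring
    have h6 : (i : ℕ) + (j' : ℕ) ≡ (i' : ℕ) + (j : ℕ) [MOD d] := by
      rw [← Int.natCast_modEq_iff]; push_cast; exact h5
    rw [sub_eq_sub_iff_add_eq_add]
    apply Fin.ext
    rw [Fin.val_add, Fin.val_add]
    exact h6
  obtain ⟨p, -, hp⟩ := Finset.exists_max_image (Finset.univ : Finset (Fin d × Fin d))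
    (fun p => w p.1 p.2) ⟨(0, 0), Finset.mem_univ _⟩
  obtain ⟨i₀, j₀⟩ := p
  have hmax : ∀ i j, w i j ≤ w i₀ j₀ := fun i j => hp (i, j) (Finset.mem_univ _)
  set M := w i₀ j₀ with hM
  have hM0 : M ≠ 0 := by
    intro h
    apply hX0
    ext i j
    have h1 : w i j = 0 := le_antisymm (h ▸ hmax i j) zero_le
    simpa [hw, hd, hexp] using h1
  set π₀ : Equiv.Perm (Fin d) := Equiv.addRight (i₀ - j₀) with hπ₀
  have hπM : ∀ j, w (π₀ j) j = M := by
    intro j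
    have := hshift' (j - j₀) i₀ j₀
    rw [hM, ← this, hπ₀]
    congr 1
    · simp only [Equiv.coe_addRight]; abel
    · abel
  have hprod : ∀ π : Equiv.Perm (Fin d), v (∏ j, X (π j) j) ^ d = ∏ j, w (π j) j := by
    intro π
    have h1 : ∏ j : Fin d, (exp (((π j : Fin d) : ℕ) - (j : ℕ) : ℤ) : ℤᵐ⁰) = 1 := by
      have h2 : ∀ (s : Finset (Fin d)) (f : Fin d → ℤ),
          ∏ j ∈ s, (exp (f j) : ℤᵐ⁰) = exp (∑ j ∈ s, f j) := by
        intro s f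
        induction s using Finset.cons_induction with
        | empty => simp
        | cons a s ha ih => rw [Finset.prod_cons, Finset.sum_cons, exp_add, ih]
      rw [h2, Finset.sum_sub_distrib,
        Equiv.sum_comp π (fun j : Fin d => ((j : ℕ) : ℤ)), sub_self, exp_zero]
    simp only [hw, Finset.prod_mul_distrib, h1, mul_one, map_prod, Finset.prod_pow]
  have hlt : ∀ π : Equiv.Perm (Fin d), π ≠ π₀ →
      v (∏ j, X (π j) j) < v (∏ j, X (π₀ j) j) := by
    intro π hπ
    apply lt_of_pow_lt_pow_left₀ d zero_le
    rw [hprod, hprod]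
    obtain ⟨k, hk⟩ : ∃ k, π k ≠ π₀ k := by
      by_contra! h
      exact hπ (Equiv.ext h)
    have hk' : w (π k) k < M := by
      refine lt_of_le_of_ne (hmax _ _) fun h => hk ?_
      have := hres _ _ _ _ (h ▸ hM0) (h.trans (hπM k).symm)
      exact sub_left_injective this
    by_cases hz : ∏ j, w (π j) j = 0
    · rw [hz]
      exact zero_lt_iff.2 (Finset.prod_ne_zero_iff.2 fun j _ => by rw [hπM]; exact hM0)
    · rw [← ne_eq, Finset.prod_ne_zero_iff] at hz
      refine Finset.prod_lt_prod (fun j _ => zero_lt_iff.2 (hz j (Finset.mem_univ _)))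
        (fun j _ => (hmax _ _).trans (hπM j).ge) ⟨k, Finset.mem_univ _, ?_⟩
      rw [hπM]; exact hk'
  have hne : v (∏ j, X (π₀ j) j) ≠ 0 := by
    intro h
    have := hprod π₀
    rw [h, zero_pow hd] at this
    exact (Finset.prod_ne_zero_iff.2 fun j _ => by rw [hπM]; exact hM0) this.symm
  have hsign : ∀ π : Equiv.Perm (Fin d),
      v (Equiv.Perm.sign π • ∏ j, X (π j) j) = v (∏ j, X (π j) j) := by
    intro π
    rcases Int.units_eq_one_or (Equiv.Perm.sign π) with h | h <;> simp [h, Units.smul_def]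
  rw [Matrix.det_apply, ← Finset.add_sum_erase _ _ (Finset.mem_univ π₀)]
  intro h
  have h1 := v.map_sum_lt (s := Finset.univ.erase π₀)
    (f := fun π => Equiv.Perm.sign π • ∏ j, X (π j) j) hne
    fun π hπ => (hsign π).trans_lt (hlt π (Finset.ne_of_mem_erase hπ))
  rw [← hsign π₀, eq_neg_of_add_eq_zero_left h, v.map_neg] at h1
  exact lt_irrefl _ h1

/-- A square matrix over a field can be compressed to an identity matrix of size its rank. -/
theorem exists_mul_mul_eq_one_of_rank {F m : Type*} [Field F] [Fintype m] [DecidableEq m]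
    (A : Matrix m m F) :
    ∃ (k : ℕ) (V : Matrix (Fin k) m F) (U : Matrix m (Fin k) F), A.rank = k ∧ V * A * U = 1 := by
  obtain ⟨V, U, e, -, -, h⟩ := A.exists_rank_normal_form
  refine ⟨A.rank, V.submatrix (fun a => e.symm (Sum.inl a)) id,
    U.submatrix id (fun a => e.symm (Sum.inl a)), rfl, ?_⟩
  ext a b
  have h1 := congrFun (congrFun h (e.symm (Sum.inl a))) (e.symm (Sum.inl b))
  simpa [Matrix.one_apply, Matrix.mul_apply] using h1

/-- The rank of a matrix of polynomials does not increase under specialization. -/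
theorem rank_map_eval_le {F E τ m : Type*} [Field F] [Field E] [Fintype m] [DecidableEq m]
    (ψ : MvPolynomial τ F →+* E) (hψ : Function.Injective ψ) (x : τ → F)
    (M : Matrix m m (MvPolynomial τ F)) :
    (M.map (MvPolynomial.eval x)).rank ≤ (M.map ψ).rank := by
  obtain ⟨k, V, U, hk, h⟩ := exists_mul_mul_eq_one_of_rank (M.map (MvPolynomial.eval x))
  set N : Matrix (Fin k) (Fin k) (MvPolynomial τ F) :=
    V.map (MvPolynomial.C (σ := τ)) * M * U.map (MvPolynomial.C (σ := τ)) with hN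
  have h1 : N.map (MvPolynomial.eval x) = 1 := by
    rw [hN, Matrix.map_mul, Matrix.map_mul, ← h]
    congr 2 <;> ext <;> simp
  have h3 : N.det ≠ 0 := by
    intro h0
    have := congrArg Matrix.det h1
    rw [← RingHom.mapMatrix_apply, ← RingHom.map_det, h0, map_zero, Matrix.det_one] at this
    exact zero_ne_one this
  have h4 : (N.map ψ).det ≠ 0 := by
    rw [← RingHom.mapMatrix_apply, ← RingHom.map_det]
    exact (map_ne_zero_iff ψ hψ).2 h3
  have h5 := Matrix.rank_of_det_ne_zero h4
  rw [Fintype.card_fin, hN, Matrix.map_mul, Matrix.map_mul] at h5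
  rw [hk, ← h5]
  exact (Matrix.rank_mul_le_left _ _).trans (Matrix.rank_mul_le_right _ _)

/-- The determinant of a matrix of polynomials of total degree at most `k` has total degree at
most `k` times the size of the matrix. -/
theorem totalDegree_det_le {F τ m : Type*} [CommRing F] [Fintype m] [DecidableEq m] (k : ℕ)
    (M : Matrix m m (MvPolynomial τ F)) (hM : ∀ i j, (M i j).totalDegree ≤ k) :
    M.det.totalDegree ≤ Fintype.card m * k := by
  rw [Matrix.det_apply]
  refine MvPolynomial.totalDegree_finsetSum_le fun π _ => ?_
  rw [Units.smul_def]
  refine (MvPolynomial.totalDegree_smul_le _ _).trans ?_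
  refine (MvPolynomial.totalDegree_finsetProd _ _).trans ?_
  refine (Finset.sum_le_card_nsmul _ _ k fun i _ => hM _ _).trans ?_
  simp

/-- A nonzero polynomial does not vanish identically over a field with more elements than its
total degree. -/
theorem exists_eval_ne_zero_of_totalDegree_lt {F τ : Type*} [Field F] [Finite τ] (N : ℕ)
    (hF : (N : Cardinal) ≤ Cardinal.mk F) (p : MvPolynomial τ F) (hp : p ≠ 0)
    (hdeg : p.totalDegree < N) : ∃ x, MvPolynomial.eval x p ≠ 0 := by
  by_contra! h
  obtain ⟨S, hS⟩ := Cardinal.le_mk_iff_exists_set.1 hF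
  have hfin : S.Finite := Cardinal.lt_aleph0_iff_set_finite.1 (hS ▸ Cardinal.natCast_lt_aleph0)
  refine hp (MvPolynomial.eq_zero_of_eval_zero_at_prod_finset p (fun _ => hfin.toFinset)
    (fun i => (MvPolynomial.degreeOf_le_totalDegree p i).trans_lt (hdeg.trans_le ?_))
    fun x _ => h x)
  rw [← Set.ncard_eq_toFinset_card S hfin, ← Nat.card_coe_set_eq, Nat.card, hS,
    Cardinal.toNat_natCast]

section CyclicTwist

variable {E : Type*} [Field E] {d : ℕ} [NeZero d] {σ : E →+* E} {q : Fin d → E}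
  {ι κ μ : Type*}

/-- The block matrices fixed by the semilinear map that applies `σ` to the entries and conjugates
every `d × d` block by the cyclic shift with weights `q`. -/
def IsCyclicTwisted (σ : E →+* E) (q : Fin d → E)
    (W : Matrix (ι × Fin d) (κ × Fin d) E) : Prop :=
  ∀ a b i j, W (a, i + 1) (b, j + 1) * q j = q i * σ (W (a, i) (b, j))

/-- The cyclic shift of the indices inside the blocks. -/
def blockShift (ι : Type*) (d : ℕ) [NeZero d] : ι × Fin d ≃ ι × Fin d :=
  (Equiv.refl ι).prodCongr (Equiv.addRight 1)

theorem isCyclicTwisted_iff [Fintype ι] [Fintype κ] [DecidableEq ι] [DecidableEq κ]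
    (W : Matrix (ι × Fin d) (κ × Fin d) E) :
    IsCyclicTwisted σ q W ↔
      W.submatrix (blockShift ι d) (blockShift κ d) *
          (diagonal (fun p => q p.2) : Matrix (κ × Fin d) (κ × Fin d) E) =
        (diagonal (fun p => q p.2) : Matrix (ι × Fin d) (ι × Fin d) E) * W.map σ := by
  rw [← Matrix.ext_iff]
  simp only [mul_diagonal, diagonal_mul, Prod.forall, IsCyclicTwisted]
  constructor
  · intro h a i b j
    exact h a b i j
  · intro h a b i j
    exact h a i b j

theorem IsCyclicTwisted.sub {W V : Matrix (ι × Fin d) (κ × Fin d) E}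
    (hW : IsCyclicTwisted σ q W) (hV : IsCyclicTwisted σ q V) : IsCyclicTwisted σ q (W - V) := by
  intro a b i j
  simp only [Matrix.sub_apply, sub_mul, map_sub, mul_sub, hW a b i j, hV a b i j]

theorem IsCyclicTwisted.blockSubmatrix {ι' κ' : Type*} {W : Matrix (ι × Fin d) (κ × Fin d) E}
    (hW : IsCyclicTwisted σ q W) (f : ι' → ι) (g : κ' → κ) :
    IsCyclicTwisted σ q (W.submatrix (Prod.map f id) (Prod.map g id)) :=
  fun a b i j => hW (f a) (g b) i j

theorem IsCyclicTwisted.mul [Fintype ι] [Fintype κ] [Fintype μ]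
    {W : Matrix (ι × Fin d) (κ × Fin d) E} {V : Matrix (κ × Fin d) (μ × Fin d) E}
    (hW : IsCyclicTwisted σ q W) (hV : IsCyclicTwisted σ q V) : IsCyclicTwisted σ q (W * V) := by
  classical
  rw [isCyclicTwisted_iff] at *
  rw [← submatrix_mul_equiv W V _ (blockShift κ d) _, Matrix.mul_assoc, hV, ← Matrix.mul_assoc,
    hW, Matrix.mul_assoc, Matrix.map_mul]

theorem IsCyclicTwisted.inv [Fintype ι] [DecidableEq ι] {W : Matrix (ι × Fin d) (ι × Fin d) E}
    (hW : IsCyclicTwisted σ q W) (hdet : W.det ≠ 0) : IsCyclicTwisted σ q W⁻¹ := by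
  rw [isCyclicTwisted_iff] at *
  have hu : IsUnit W.det := isUnit_iff_ne_zero.2 hdet
  have h1 : W⁻¹.submatrix (blockShift ι d) (blockShift ι d) *
      W.submatrix (blockShift ι d) (blockShift ι d) = 1 := by
    rw [submatrix_mul_equiv, nonsing_inv_mul _ hu, submatrix_one_equiv]
  have h2 : W.map σ * W⁻¹.map σ = 1 := by
    rw [← Matrix.map_mul, mul_nonsing_inv _ hu, Matrix.map_one _ (map_zero σ) (map_one σ)]
  set S := W⁻¹.submatrix (blockShift ι d) (blockShift ι d)
  set Q : Matrix (ι × Fin d) (ι × Fin d) E := diagonal (fun p => q p.2)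
  calc S * Q = S * (Q * W.map σ) * W⁻¹.map σ := by
        rw [Matrix.mul_assoc, Matrix.mul_assoc, h2, Matrix.mul_one]
    _ = Q * W⁻¹.map σ := by
        rw [← hW, ← Matrix.mul_assoc, h1, Matrix.one_mul]

/-- If every nonzero twisted block is nonsingular, then a nonsingular twisted window extends as
long as the rank of the ambient matrix exceeds the size of the window. -/
theorem IsCyclicTwisted.exists_window_succ {n ρ : ℕ}
    (hdiv : ∀ X : Matrix (Fin d) (Fin d) E,
      (∀ i j, X (i + 1) (j + 1) * q j = q i * σ (X i j)) → X ≠ 0 → X.det ≠ 0)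
    {A : Matrix (Fin n × Fin d) (Fin n × Fin d) E} (hA : IsCyclicTwisted σ q A)
    (hrank : ρ * d < A.rank) (f g : Fin ρ → Fin n)
    (hdet : (A.submatrix (Prod.map f id) (Prod.map g id)).det ≠ 0) :
    ∃ f' g' : Fin (ρ + 1) → Fin n,
      (A.submatrix (Prod.map f' id) (Prod.map g' id)).det ≠ 0 := by
  set W := A.submatrix (Prod.map f (id : Fin d → Fin d)) (Prod.map g (id : Fin d → Fin d)) with hW
  have hWt : IsCyclicTwisted σ q W := hA.blockSubmatrix f g
  have hu : IsUnit W.det := isUnit_iff_ne_zero.2 hdet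
  set S := A - A.submatrix id (Prod.map g id) * W⁻¹ * A.submatrix (Prod.map f id) id with hS
  have hSt : IsCyclicTwisted σ q S :=
    hA.sub (((hA.blockSubmatrix id g).mul (hWt.inv hdet)).mul (hA.blockSubmatrix f id))
  have hS0 : S ≠ 0 := by
    intro h
    rw [hS, sub_eq_zero] at h
    rw [h] at hrank
    refine absurd hrank (not_lt.2 ((rank_mul_le_left _ _).trans ((rank_mul_le_right _ _).trans ?_)))
    simpa using rank_le_card_width W⁻¹
  obtain ⟨a, b, hab⟩ : ∃ a b,
      S.submatrix (fun i : Fin d => (a, i)) (fun i : Fin d => (b, i)) ≠ 0 := by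
    by_contra! h
    apply hS0
    ext ⟨a, i⟩ ⟨b, j⟩
    exact congrFun (congrFun (h a b) i) j
  have hSab := hdiv _ (fun i j => hSt a b i j) hab
  let e : (Fin ρ × Fin d) ⊕ Fin d ≃ Fin (ρ + 1) × Fin d :=
    ((Equiv.refl _).sumCongr (Equiv.uniqueProd (Fin d) (Fin 1)).symm).trans
      ((Equiv.sumProdDistrib _ _ _).symm.trans (finSumFinEquiv.prodCongr (Equiv.refl _)))
  refine ⟨Fin.append f fun _ => a, Fin.append g fun _ => b, ?_⟩
  rw [← det_submatrix_equiv_self e]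
  have hblocks : (A.submatrix (Prod.map (Fin.append f fun _ : Fin 1 => a) (id : Fin d → Fin d))
      (Prod.map (Fin.append g fun _ : Fin 1 => b) id)).submatrix e e =
      fromBlocks W (A.submatrix (Prod.map f id) (fun i => (b, i)))
        (A.submatrix (fun i => (a, i)) (Prod.map g id))
        (A.submatrix (fun i => (a, i)) (fun i => (b, i))) := by
    ext (⟨k, i⟩ | i) (⟨l, j⟩ | j) <;> simp [e, hW]
  have : Invertible W := invertibleOfIsUnitDet W hu
  rw [hblocks, det_fromBlocks₁₁]
  refine mul_ne_zero hdet ?_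
  convert hSab using 2
  rw [invOf_eq_nonsing_inv]
  ext i j
  simp [hS, Matrix.mul_apply]

/-- If every nonzero twisted block is nonsingular, then a twisted matrix of rank greater than
`(r - 1) * d` has a nonsingular `r × r` window. -/
theorem IsCyclicTwisted.exists_window {n : ℕ}
    (hdiv : ∀ X : Matrix (Fin d) (Fin d) E,
      (∀ i j, X (i + 1) (j + 1) * q j = q i * σ (X i j)) → X ≠ 0 → X.det ≠ 0)
    {A : Matrix (Fin n × Fin d) (Fin n × Fin d) E} (hA : IsCyclicTwisted σ q A)
    (r : ℕ) (hrank : (r - 1) * d < A.rank) :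
    ∃ f g : Fin r → Fin n, (A.submatrix (Prod.map f id) (Prod.map g id)).det ≠ 0 := by
  induction r with
  | zero => exact ⟨Fin.elim0, Fin.elim0, by simp⟩
  | succ ρ ih =>
    obtain ⟨f, g, h⟩ := ih ((Nat.mul_le_mul_right d (by omega)).trans_lt hrank)
    exact hA.exists_window_succ hdiv (by simpa using hrank) f g h

end CyclicTwist

open WithZero in
/-- An injective self-map of the variables extends to an endomorphism of a valued field containing
the polynomial ring with one further variable, which is fixed and has valuation `exp 1`. -/
theorem exists_valued_field_of_variable_map (F Y : Type) [Field F] (s : Y → Y)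
    (hs : Function.Injective s) :
    ∃ (E : Type) (_ : Field E) (ψ : MvPolynomial (Option Y) F →+* E) (σ : E →+* E)
      (v : Valuation E ℤᵐ⁰), Function.Injective ψ ∧ (∀ x, v (σ x) = v x) ∧
      v (ψ (MvPolynomial.X none)) = exp 1 ∧
      ∀ p, σ (ψ p) = ψ (MvPolynomial.rename (Option.map s) p) := by
  classical
  let L := FractionRing (MvPolynomial Y F)
  let σL : L →+* L := IsFractionRing.map (A := MvPolynomial Y F) (B := MvPolynomial Y F)
    (j := (MvPolynomial.rename (R := F) s).toRingHom) (MvPolynomial.rename_injective s hs)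
  have hσL : ∀ p : MvPolynomial Y F, σL (algebraMap _ L p) =
      algebraMap _ L (MvPolynomial.rename s p) := fun p => IsLocalization.map_eq _ p
  have hinj : Function.Injective (Polynomial.mapRingHom σL) :=
    Polynomial.map_injective σL σL.injective
  have hle := nonZeroDivisors_le_comap_nonZeroDivisors_of_injective _ hinj
  let σ : RatFunc L →+* RatFunc L := RatFunc.mapRingHom (Polynomial.mapRingHom σL) hle
  have hσ : ∀ p q : Polynomial L,
      σ (algebraMap _ (RatFunc L) p / algebraMap _ (RatFunc L) q) =
      algebraMap _ (RatFunc L) (p.map σL) / algebraMap _ (RatFunc L) (q.map σL) :=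
    fun p q => RatFunc.map_apply_div (Polynomial.mapRingHom σL) hle p q
  have hσ' : ∀ p : Polynomial L,
      σ (algebraMap _ (RatFunc L) p) = algebraMap _ (RatFunc L) (p.map σL) := by
    intro p
    simpa using hσ p 1
  have hσC : ∀ a : L, σ (RatFunc.C a) = RatFunc.C (σL a) := by
    intro a
    rw [← RatFunc.algebraMap_C, hσ', Polynomial.map_C, RatFunc.algebraMap_C]
  have hσX : σ RatFunc.X = RatFunc.X := by
    rw [← RatFunc.algebraMap_X, hσ', Polynomial.map_X]
  let ψ : MvPolynomial (Option Y) F →+* RatFunc L :=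
    (algebraMap (Polynomial L) (RatFunc L)).comp ((Polynomial.mapRingHom
      (algebraMap (MvPolynomial Y F) L)).comp (MvPolynomial.optionEquivLeft F Y).toRingHom)
  refine ⟨RatFunc L, inferInstance, ψ, σ, RatFunc.inftyValuation L, ?_, ?_, ?_, ?_⟩
  · exact (IsFractionRing.injective (Polynomial L) (RatFunc L)).comp
      ((Polynomial.map_injective _ (IsFractionRing.injective (MvPolynomial Y F) L)).comp
        (MvPolynomial.optionEquivLeft F Y).injective)
  · have hpoly : ∀ p : Polynomial L, RatFunc.inftyValuation L (algebraMap _ (RatFunc L) (p.map σL))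
        = RatFunc.inftyValuation L (algebraMap _ (RatFunc L) p) := by
      intro p
      by_cases hp : p = 0
      · simp [hp]
      · have hp' : p.map σL ≠ 0 := (Polynomial.map_ne_zero_iff σL.injective).2 hp
        rw [RatFunc.inftyValuation_apply, RatFunc.inftyValuation_apply,
          RatFunc.inftyValuation.polynomial L hp, RatFunc.inftyValuation.polynomial L hp',
          Polynomial.natDegree_map]
    intro x
    rw [← RatFunc.num_div_denom x, hσ, map_div₀, map_div₀, hpoly, hpoly]
  · have : ψ (MvPolynomial.X none) = RatFunc.X := by
      simp [ψ, MvPolynomial.optionEquivLeft_X_none]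
    rw [this, RatFunc.inftyValuation.X]
  · intro p
    change (σ.comp ψ) p = (ψ.comp (MvPolynomial.rename (Option.map s)).toRingHom) p
    congr 1
    apply MvPolynomial.ringHom_ext
    · intro c
      simp [ψ, hσC, hσL]
    · rintro (_ | y)
      · simp [ψ, hσX, MvPolynomial.optionEquivLeft_X_none]
      · simp [ψ, hσC, hσL, MvPolynomial.optionEquivLeft_X_some]

theorem mem_blowUp_iff_exists_sum {F : Type} [Field F] {n k l : ℕ}
    {B : Submodule F (Matrix (Fin n) (Fin n) F)} {A : Matrix (Fin n × Fin k) (Fin n × Fin l) F} :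
    A ∈ blowUp B k l ↔ ∃ (m : ℕ) (b : Fin m → Matrix (Fin n) (Fin n) F)
      (T : Fin m → Matrix (Fin k) (Fin l) F), (∀ t, b t ∈ B) ∧ A = ∑ t, b t ⊗ₖ T t := by
  constructor
  · intro hA
    obtain ⟨m, c, g, rfl⟩ := Submodule.mem_span_set'.1 hA
    choose b hb T hT using fun t => (g t).2
    refine ⟨m, b, fun t => c t • T t, hb, Finset.sum_congr rfl fun t _ => ?_⟩
    rw [hT, kronecker_smul]
  · rintro ⟨m, b, T, hb, rfl⟩
    exact Submodule.sum_mem _ fun t _ => Submodule.subset_span ⟨b t, hb t, T t, rfl⟩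

/-- Two index tuples with a nonsingular window can be sorted. -/
theorem exists_strictMono_window {F : Type} [Field F] {n d r : ℕ} [NeZero d]
    (A : Matrix (Fin n × Fin d) (Fin n × Fin d) F) (f g : Fin r → Fin n)
    (h : (window A r f g).det ≠ 0) :
    ∃ i j : Fin r → Fin n, StrictMono i ∧ StrictMono j ∧ IsUnit (window A r i j).det := by
  have hf : Function.Injective f := by
    intro a b hab
    by_contra hne
    refine h (det_zero_of_row_eq (i := (a, 0)) (j := (b, 0)) (by simp [hne]) ?_)
    ext p
    simp [window, hab]
  have hg : Function.Injective g := by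
    intro a b hab
    by_contra hne
    refine h (det_zero_of_column_eq (i := (a, 0)) (j := (b, 0)) (by simp [hne]) ?_)
    intro p
    simp [window, hab]
  refine ⟨f ∘ Tuple.sort f, g ∘ Tuple.sort g,
    (Tuple.monotone_sort f).strictMono_of_injective (hf.comp (Equiv.injective _)),
    (Tuple.monotone_sort g).strictMono_of_injective (hg.comp (Equiv.injective _)), ?_⟩
  rw [← isUnit_iff_isUnit_det]
  have h1 : IsUnit (window A r f g) := (isUnit_iff_isUnit_det _).2 (isUnit_iff_ne_zero.2 h)
  exact (isUnit_submatrix_equiv ((Tuple.sort f).prodCongr (Equiv.refl (Fin d)))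
    ((Tuple.sort g).prodCongr (Equiv.refl (Fin d)))).2 h1

section GenericBlowUp

variable {F : Type} [Field F] {n d m : ℕ}

/-- The generic element of the blow-up spanned by the matrices `b t`: the block coefficients are
independent variables, those above the diagonal being multiplied by one further variable. -/
noncomputable def genericBlowUp (d : ℕ) (b : Fin m → Matrix (Fin n) (Fin n) F) :
    Matrix (Fin n × Fin d) (Fin n × Fin d)
      (MvPolynomial (Option (Fin m × Fin d × Fin d)) F) :=
  fun p q => ∑ t, MvPolynomial.C (b t p.1 q.1) *
    ((if p.2 < q.2 then MvPolynomial.X none else 1) * MvPolynomial.X (some (t, p.2, q.2)))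

theorem genericBlowUp_map_eval (b : Fin m → Matrix (Fin n) (Fin n) F)
    (x : Option (Fin m × Fin d × Fin d) → F) :
    (genericBlowUp d b).map (MvPolynomial.eval x) =
      ∑ t, b t ⊗ₖ Matrix.of fun i j => (if i < j then x none else 1) * x (some (t, i, j)) := by
  ext ⟨p, i⟩ ⟨q, j⟩
  simp only [genericBlowUp, Matrix.map_apply, map_sum, map_mul, MvPolynomial.eval_C,
    MvPolynomial.eval_X, Matrix.sum_apply, kronecker_apply, Matrix.of_apply]
  refine Finset.sum_congr rfl fun t _ => ?_
  split_ifs <;> simp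

theorem totalDegree_genericBlowUp_le (b : Fin m → Matrix (Fin n) (Fin n) F)
    (p q : Fin n × Fin d) : (genericBlowUp d b p q).totalDegree ≤ 2 := by
  refine MvPolynomial.totalDegree_finsetSum_le fun t _ => ?_
  refine (MvPolynomial.totalDegree_mul _ _).trans ?_
  have h1 := MvPolynomial.totalDegree_mul
    (if p.2 < q.2 then MvPolynomial.X none else 1 : MvPolynomial (Option (Fin m × Fin d × Fin d)) F)
    (MvPolynomial.X (some (t, p.2, q.2)))
  have h2 : (if p.2 < q.2 then MvPolynomial.X none else 1 :
      MvPolynomial (Option (Fin m × Fin d × Fin d)) F).totalDegree ≤ 1 := by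
    split_ifs <;> simp
  rw [MvPolynomial.totalDegree_X] at h1
  rw [MvPolynomial.totalDegree_C]
  omega

theorem Fin.val_add_one_of_ne_zero [NeZero d] {i : Fin d} (hi : i + 1 ≠ 0) :
    ((i + 1 : Fin d) : ℕ) = i + 1 := by
  have h : ((i + 1 : Fin d) : ℕ) = (i + 1) % d := by
    rw [Fin.val_add, Fin.val_one', Nat.add_mod_mod]
  rw [h, Nat.mod_eq_of_lt]
  refine lt_of_le_of_ne i.2 fun h' => hi (Fin.ext ?_)
  rw [h, h', Nat.mod_self, Fin.val_zero]

theorem Fin.val_add_one_eq_of_eq_zero [NeZero d] {i : Fin d} (hi : i + 1 = 0) :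
    (i : ℕ) + 1 = d := by
  have h : ((i + 1 : Fin d) : ℕ) = (i + 1) % d := by
    rw [Fin.val_add, Fin.val_one', Nat.add_mod_mod]
  rw [hi, Fin.val_zero] at h
  exact le_antisymm i.2 (Nat.le_of_dvd (Nat.succ_pos _) (Nat.dvd_of_mod_eq_zero h.symm))

theorem isCyclicTwisted_genericBlowUp [NeZero d] {E : Type} [Field E]
    (ψ : MvPolynomial (Option (Fin m × Fin d × Fin d)) F →+* E) (σ : E →+* E)
    (hσ : ∀ p, σ (ψ p) = ψ (MvPolynomial.rename
      (Option.map fun y : Fin m × Fin d × Fin d => (y.1, y.2.1 + 1, y.2.2 + 1)) p))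
    (b : Fin m → Matrix (Fin n) (Fin n) F) :
    IsCyclicTwisted σ (fun i : Fin d => if i + 1 = 0 then ψ (MvPolynomial.X none) else 1)
      ((genericBlowUp d b).map ψ) := by
  intro a a' i j
  simp only [genericBlowUp, Matrix.map_apply, hσ, map_sum, map_mul, MvPolynomial.rename_C,
    MvPolynomial.rename_X, Option.map_some, Finset.sum_mul, Finset.mul_sum]
  refine Finset.sum_congr rfl fun t _ => ?_
  have hi := i.2
  have hj := j.2
  have key : ψ (if i + 1 < j + 1 then MvPolynomial.X none else 1) *
      (if j + 1 = 0 then ψ (MvPolynomial.X none) else 1) =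
      (if i + 1 = 0 then ψ (MvPolynomial.X none) else 1) *
      ψ (MvPolynomial.rename
        (Option.map fun y : Fin m × Fin d × Fin d => (y.1, y.2.1 + 1, y.2.2 + 1))
        (if i < j then MvPolynomial.X none else 1)) := by
    by_cases h1 : i + 1 = 0 <;> by_cases h2 : j + 1 = 0
    · have := Fin.val_add_one_eq_of_eq_zero h1
      have := Fin.val_add_one_eq_of_eq_zero h2
      have h3 : ¬ i < j := by rw [Fin.lt_def]; omega
      simp [h1, h2, h3]
    · have := Fin.val_add_one_eq_of_eq_zero h1
      have h4 := Fin.val_add_one_of_ne_zero h2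
      have h3 : ¬ i < j := by rw [Fin.lt_def]; omega
      have h5 : 0 < j + 1 := by rw [Fin.lt_def, h4, Fin.val_zero]; omega
      simp [h1, h2, h3, h5]
    · have := Fin.val_add_one_eq_of_eq_zero h2
      have h4 := (i + 1).isLt
      rw [Fin.val_add_one_of_ne_zero h1] at h4
      have h3 : i < j := by rw [Fin.lt_def]; omega
      simp [h1, h2, h3]
    · have h3 : i + 1 < j + 1 ↔ i < j := by
        rw [Fin.lt_def, Fin.lt_def, Fin.val_add_one_of_ne_zero h1, Fin.val_add_one_of_ne_zero h2]
        omega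
      by_cases h4 : i < j <;> simp [h1, h2, h3, h4]
  linear_combination
    ψ (MvPolynomial.C (b t a a')) * ψ (MvPolynomial.X (some (t, i + 1, j + 1))) * key

end GenericBlowUp

/-- Window form of regularity: for all positive `r, d` there is `N` such that over any
field `F` with `|F| ≥ N`, if the `(d,d)`-blow-up of `B ≤ M(n,F)` contains a matrix of rank
greater than `(r−1)·d`, then some matrix in the blow-up has a nonsingular `r×r` window,
indexed by strictly increasing index sequences. -/
theorem stmt5 (r d : ℕ) (hr : 0 < r) (hd : 0 < d) :
    ∃ N : ℕ, ∀ (F : Type) (_ : Field F),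
      (N : Cardinal) ≤ Cardinal.mk F →
      ∀ (n : ℕ) (B : Submodule F (Matrix (Fin n) (Fin n) F)),
        (∃ A ∈ blowUp B d d, (r - 1) * d < A.rank) →
        ∃ A' ∈ blowUp B d d, ∃ i j : Fin r → Fin n,
          StrictMono i ∧ StrictMono j ∧ IsUnit (window A' r i j).det := by
  have : NeZero d := ⟨hd.ne'⟩
  refine ⟨r * d * 2 + 1, fun F _ hF n B ⟨A, hAB, hA⟩ => ?_⟩
  obtain ⟨m, b, T, hb, rfl⟩ := mem_blowUp_iff_exists_sum.1 hAB
  let s : Fin m × Fin d × Fin d → Fin m × Fin d × Fin d := fun y => (y.1, y.2.1 + 1, y.2.2 + 1)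
  have hs : Function.Injective s := by
    rintro ⟨t, i, j⟩ ⟨t', i', j'⟩ h
    simpa [s] using h
  obtain ⟨E, _, ψ, σ, v, hψ, hv, hvX, hσ⟩ := exists_valued_field_of_variable_map F _ s hs
  let x₀ : Option (Fin m × Fin d × Fin d) → F := fun o => o.elim 1 fun y => T y.1 y.2.1 y.2.2
  have hx₀ : (genericBlowUp d b).map (MvPolynomial.eval x₀) = ∑ t, b t ⊗ₖ T t := by
    rw [genericBlowUp_map_eval]
    refine Finset.sum_congr rfl fun t _ => congrArg _ ?_
    ext i j
    simp [x₀]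
  have hrank := hA.trans_le (hx₀ ▸ rank_map_eval_le ψ hψ x₀ (genericBlowUp d b))
  have hq : ∀ i : Fin d, v (if i + 1 = 0 then ψ (MvPolynomial.X none) else 1) ^ d *
      WithZero.exp (((i + 1 : Fin d) : ℕ) : ℤ) = WithZero.exp ((i : ℕ) + 1 : ℤ) := by
    intro i
    split_ifs with h
    · have h1 := Fin.val_add_one_eq_of_eq_zero h
      rw [hvX, h, Fin.val_zero, ← WithZero.exp_nsmul, Nat.cast_zero, WithZero.exp_zero, mul_one,
        nsmul_one]
      exact_mod_cast congrArg (fun k : ℕ => WithZero.exp (k : ℤ)) h1.symm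
    · rw [map_one, one_pow, one_mul, Fin.val_add_one_of_ne_zero h, Nat.cast_succ]
  obtain ⟨f, g, hfg⟩ := (isCyclicTwisted_genericBlowUp ψ σ hσ b).exists_window
    (fun X hX hX0 => det_ne_zero_of_cyclic_twist v σ hv _ hq X hX hX0) r hrank
  set P := (genericBlowUp d b).submatrix (Prod.map f (id : Fin d → Fin d))
    (Prod.map g (id : Fin d → Fin d)) with hP
  have hP0 : P.det ≠ 0 := by
    intro h
    rw [submatrix_map, ← hP, ← RingHom.mapMatrix_apply, ← RingHom.map_det, h, map_zero] at hfg
    exact hfg rfl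
  have hdeg : P.det.totalDegree < r * d * 2 + 1 := by
    have := totalDegree_det_le 2 P fun _ _ => totalDegree_genericBlowUp_le b _ _
    simp only [Fintype.card_prod, Fintype.card_fin] at this
    omega
  obtain ⟨x, hx⟩ := exists_eval_ne_zero_of_totalDegree_lt _ hF P.det hP0 hdeg
  refine ⟨(genericBlowUp d b).map (MvPolynomial.eval x), ?_,
    exists_strictMono_window _ f g ?_⟩
  · rw [genericBlowUp_map_eval]
    exact mem_blowUp_iff_exists_sum.2 ⟨m, b, _, hb, rfl⟩
  · rwa [RingHom.map_det] at hx
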